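/- For the elephant random walk with memory parameter p ∈ [0, 1) on a Cayley graph that is the d-regular tree T_d (d ≥ 3), the random variables √n · [Δ_n/n − (d − 2)/d − (2(1 − pd)/(d − 1)) · Ξ_n] converge in distribution, as n → ∞, to a centered Gaussian law N(0, 4(d − 1)/d²). -/

import Mathlib

open MeasureTheory ProbabilityTheory Filter

noncomputable section

/-- The Cayley graph of a group with respect to a finite set of generators. -/
def cayleyGraph {G : Type*} [Group G] (S : Finset G) : SimpleGraph G where
  Adj x y := x ≠ y ∧ (y * x⁻¹ ∈ S ∨ x * y⁻¹ ∈ S)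
  symm := by
    constructor
    rintro x y ⟨h1, h2⟩
    refine ⟨h1.symm, ?_⟩
    rcases h2 with h | h
    · exact Or.inr h
    · exact Or.inl h
  loopless := ⟨fun x h => h.1 rfl⟩

/-- The elephant random walk (ERW) with memory parameter `p` on the Cayley graph of a
group `G` with respect to a symmetric generating set `S` of cardinality `d`, not
containing the identity, whose Cayley graph is a tree (hence the `d`-regular tree
`T_d`).  The steps are `g 1, g 2, …` (the value of `g 0` is irrelevant).  The law of
the process is characterised by: `g 1` is uniform on `S`, and, conditionally on the
first `n` steps being `s 1, …, s n`, the next step `g (n+1)` equals `a ∈ S` with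
probability `p * N/n + ((1-p)/(d-1)) * (n-N)/n`, where `N = #{1 ≤ k ≤ n : s k = a}`;
this is precisely the probability that the walker, recalling a uniform past epoch
`D ∈ {1, …, n}`, repeats `g D` with probability `p` and takes any given other step
with probability `(1-p)/(d-1)`. -/
structure ERW (G : Type*) [Group G] [DecidableEq G] (d : ℕ) (p : ℝ)
    (Ω : Type*) [MeasurableSpace Ω] (P : Measure Ω) where
  S : Finset G
  card_S : S.card = d
  symm_S : ∀ s ∈ S, s⁻¹ ∈ S
  one_not_mem : (1 : G) ∉ S
  tree : (cayleyGraph S).IsTree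
  g : ℕ → Ω → G
  meas_g : ∀ n a, MeasurableSet {ω | g n ω = a}
  mem_S : ∀ n, 1 ≤ n → ∀ ω, g n ω ∈ S
  init : ∀ a ∈ S, (P {ω | g 1 ω = a}).toReal = 1 / d
  update : ∀ n, 1 ≤ n → ∀ s : ℕ → G, ∀ a ∈ S,
    (P ({ω | ∀ k ∈ Finset.Icc 1 n, g k ω = s k} ∩ {ω | g (n + 1) ω = a})).toReal
      = (p * ((((Finset.Icc 1 n).filter fun k => s k = a).card : ℝ) / n)
          + (1 - p) / ((d : ℝ) - 1)
            * (((n : ℝ) - (((Finset.Icc 1 n).filter fun k => s k = a).card : ℝ)) / n))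
        * (P {ω | ∀ k ∈ Finset.Icc 1 n, g k ω = s k}).toReal

namespace ERW

variable {G : Type*} [Group G] [DecidableEq G] {d : ℕ} {p : ℝ}
  {Ω : Type*} [MeasurableSpace Ω] {P : Measure Ω}

/-- The position `w n = g n ⋯ g 1` of the walk at time `n`. -/
def pos (E : ERW G d p Ω P) : ℕ → Ω → G
  | 0 => fun _ => 1
  | n + 1 => fun ω => E.g (n + 1) ω * E.pos n ω

/-- `Δ n`: the (word-metric) distance of the walker from the root at time `n`. -/
def dist (E : ERW G d p Ω P) (n : ℕ) (ω : Ω) : ℕ :=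
  (cayleyGraph E.S).dist 1 (E.pos n ω)

/-- `N n a`: the number of `a`-steps taken by time `n`. -/
def count (E : ERW G d p Ω P) (a : G) (n : ℕ) (ω : Ω) : ℕ :=
  ((Finset.Icc 1 n).filter fun k => E.g k ω = a).card

/-- `γ n`: the unique step decreasing the distance to the root by 1
(a junk value if the walker is at the root). -/
def gammaStep (E : ERW G d p Ω P) (n : ℕ) (ω : Ω) : G :=
  @Classical.epsilon G ⟨1⟩ fun s =>
    s ∈ E.S ∧ (cayleyGraph E.S).dist 1 (s * E.pos n ω) + 1 = E.dist n ω

/-- `ℓ n = N n (γ n)` if the walker is away from the root, and `0` otherwise. -/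
def ell (E : ERW G d p Ω P) (n : ℕ) (ω : Ω) : ℕ :=
  if E.pos n ω = 1 then 0 else E.count (E.gammaStep n ω) n ω

/-- `Ξ n = (1/n) ∑_{k=0}^{n-1} (ℓ k / k - 1(Δ k > 0)/d)` (with the convention
`ℓ 0 / 0 = 0`, automatic since division by zero yields zero). -/
def Xi (E : ERW G d p Ω P) (n : ℕ) (ω : Ω) : ℝ :=
  (1 / n) * ∑ k ∈ Finset.range n,
    ((E.ell k ω : ℝ) / k - (if 0 < E.dist k ω then 1 else 0) / d)

/-- The natural filtration `F n` generated by the steps up to time `n`. -/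
def filt (E : ERW G d p Ω P) (n : ℕ) : MeasurableSpace Ω :=
  ⨆ k ∈ Finset.Icc 1 n, MeasurableSpace.comap (E.g k) ⊤

/-- `G n = E[Δ (n+1) - Δ n | F n]`. -/
def drift (E : ERW G d p Ω P) (n : ℕ) : Ω → ℝ :=
  P[fun ω => ((E.dist (n + 1) ω : ℝ) - (E.dist n ω : ℝ)) | E.filt n]

/-- The martingale differences `Y k = Δ k - Δ (k-1) - G (k-1)`. -/
def mdiff (E : ERW G d p Ω P) (k : ℕ) (ω : Ω) : ℝ :=
  (E.dist k ω : ℝ) - (E.dist (k - 1) ω : ℝ) - E.drift (k - 1) ω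

/-- The martingale `M n = ∑_{k=1}^n Y k`. -/
def mart (E : ERW G d p Ω P) (n : ℕ) (ω : Ω) : ℝ :=
  ∑ k ∈ Finset.Icc 1 n, E.mdiff k ω

end ERW

/-- The rate `r n`: `√n` in the subcritical regime `p < p_d = (d+1)/(2d)`,
`√(n / log n)` in the critical regime `p = p_d`, and `n ^ (d(1-p)/(d-1))` in the
supercritical regime `p > p_d`. -/
def rate (p : ℝ) (d : ℕ) (n : ℕ) : ℝ :=
  if p < ((d : ℝ) + 1) / (2 * d) then Real.sqrt n
  else if p = ((d : ℝ) + 1) / (2 * d) then Real.sqrt ((n : ℝ) / Real.log n)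
  else (n : ℝ) ^ ((d : ℝ) * (1 - p) / ((d : ℝ) - 1))

open scoped NNReal

/-!
The increments of `Δ` are `±1`, and `-1` occurs exactly when the next step is `γ`. Hence the drift
`E[Δ (n+1) - Δ n | F n]` equals `(d-2)/d` plus `2(1-pd)/(d-1)` times the summand of `Ξ` plus `2/d`
times the indicator of being at the root, and the quantity in the theorem is `M n / √n` plus `2/d`
times the number of visits to the root divided by `√n`, where `M` is the martingale part of `Δ`.

The deviations `x n = N n a / n - 1/d` satisfy `n x n = m n + c ∑_{k<n} x k`, with `m` a martingale
with bounded increments and `c = (pd-1)/(d-1)`. Since `m n / n → 0` by Azuma's inequality and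
`|c| < 1`, the deviations tend to `0`. So the drift is at least `(d-2)/d - o(1)`, whence the walk
visits the root finitely often and the drift converges to `b = (d-2)/d`. The conditional variance
of the `±1`-valued increments then converges to `1 - b² = 4(d-1)/d²`, and the martingale central
limit theorem and Slutsky's lemma conclude.
-/

/-! ### Averaged recursions -/

section AveragedRecursion

variable {x m : ℕ → ℝ} {c L L' : ℝ}

theorem eventually_abs_average_le (hx : ∀ᶠ n in atTop, |x n| ≤ L) (hL : L < L') :
    ∀ᶠ n : ℕ in atTop, |(∑ k ∈ Finset.range n, x k) / n| ≤ L' := by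
  set excess : ℕ → ℝ := fun n => max (|x n| - L) 0
  have h_excess : Tendsto excess atTop (nhds 0) :=
    tendsto_const_nhds.congr' <| hx.mono fun n hn => (max_eq_right (sub_nonpos.2 hn)).symm
  filter_upwards [h_excess.cesaro.eventually (gt_mem_nhds (sub_pos.2 hL)), eventually_gt_atTop 0]
    with n hn hn_pos
  have hn_pos : (0 : ℝ) < n := by exact_mod_cast hn_pos
  have h_sum : |∑ k ∈ Finset.range n, x k| ≤ n * L + ∑ k ∈ Finset.range n, excess k :=
    calc |∑ k ∈ Finset.range n, x k| ≤ ∑ k ∈ Finset.range n, |x k| := Finset.abs_sum_le_sum_abs _ _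
      _ ≤ ∑ k ∈ Finset.range n, (L + excess k) :=
        Finset.sum_le_sum fun k _ => sub_le_iff_le_add'.1 (le_max_left _ _)
      _ = n * L + ∑ k ∈ Finset.range n, excess k := by simp [Finset.sum_add_distrib]
  rw [abs_div, Nat.abs_cast, div_le_iff₀ hn_pos]
  rw [inv_mul_lt_iff₀ hn_pos] at hn
  linarith

theorem eventually_abs_le_of_averaged_recursion
    (h_rec : ∀ n : ℕ, n * x n = m n + c * ∑ k ∈ Finset.range n, x k)
    (hm : Tendsto (fun n => m n / n) atTop (nhds 0))
    (hx : ∀ᶠ n in atTop, |x n| ≤ L) (hL : |c| * L < L') :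
    ∀ᶠ n in atTop, |x n| ≤ L' := by
  obtain ⟨K, hLK, hK⟩ : ∃ K, L < K ∧ |c| * K < L' := by
    have h_cont : Tendsto (fun K => |c| * K) (nhdsWithin L (Set.Ioi L)) (nhds (|c| * L)) :=
      (continuous_const_mul |c|).continuousWithinAt
    have h_right : ∀ᶠ K in nhdsWithin L (Set.Ioi L), L < K := self_mem_nhdsWithin
    exact (h_right.and (h_cont.eventually (gt_mem_nhds hL))).exists
  have h_gap : |(0 : ℝ)| < L' - |c| * K := by simpa using hK
  filter_upwards [eventually_abs_average_le hx hLK,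
    hm.abs.eventually (ge_mem_nhds h_gap), eventually_ne_atTop 0]
    with n h_avg h_noise hn
  have hx_eq : x n = m n / n + c * ((∑ k ∈ Finset.range n, x k) / n) := by
    have := h_rec n
    field_simp
    linarith
  calc |x n| ≤ |m n / n| + |c| * |(∑ k ∈ Finset.range n, x k) / n| := by
        rw [← abs_mul, hx_eq]
        exact abs_add_le _ _
    _ ≤ (L' - |c| * K) + |c| * K := by gcongr
    _ = L' := sub_add_cancel _ _

-- Each use of the recursion multiplies an eventual bound on `|x n|` by a factor `< 1`.
theorem tendsto_zero_of_averaged_recursion (hc : |c| < 1) (hx : ∀ n, |x n| ≤ L)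
    (h_rec : ∀ n : ℕ, n * x n = m n + c * ∑ k ∈ Finset.range n, x k)
    (hm : Tendsto (fun n => m n / n) atTop (nhds 0)) :
    Tendsto x atTop (nhds 0) := by
  obtain ⟨r, hcr, hr⟩ := exists_between hc
  have hr_pos : 0 < r := (abs_nonneg c).trans_lt hcr
  have h_bound (j : ℕ) : ∀ᶠ n in atTop, |x n| ≤ r ^ j * (|L| + 1) := by
    induction j with
    | zero =>
      refine Eventually.of_forall fun n => ?_
      linarith [hx n, le_abs_self L, pow_zero r]
    | succ j ih =>
      refine eventually_abs_le_of_averaged_recursion h_rec hm ih ?_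
      rw [pow_succ', mul_assoc]
      gcongr
  have h_geom : Tendsto (fun j : ℕ => r ^ j * (|L| + 1)) atTop (nhds 0) := by
    simpa using (tendsto_pow_atTop_nhds_zero_of_lt_one hr_pos.le hr).mul_const (|L| + 1)
  refine Metric.tendsto_nhds.2 fun ε hε => ?_
  obtain ⟨j, hj⟩ := (h_geom.eventually (gt_mem_nhds hε)).exists
  filter_upwards [h_bound j] with n hn
  simpa using hn.trans_lt hj

end AveragedRecursion

theorem tendsto_sum_range_div_sqrt_zero {x : ℕ → ℝ} (hx : ∀ᶠ n in atTop, x n = 0) :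
    Tendsto (fun n : ℕ => (∑ k ∈ Finset.range n, x k) / √n) atTop (nhds 0) := by
  obtain ⟨N, hN⟩ := eventually_atTop.1 hx
  have h_sum : Summable x :=
    summable_of_ne_finset_zero (s := Finset.range N) fun n hn => hN n (by simpa using hn)
  exact h_sum.hasSum.tendsto_sum_nat.div_atTop
    (Real.tendsto_sqrt_atTop.comp tendsto_natCast_atTop_atTop)

/-! ### Bounded martingale differences -/

section MartingaleDiff

variable {Ω : Type*} {mΩ : MeasurableSpace Ω} {P : Measure Ω}

section PullOut

variable {F : Type*} [NormedAddCommGroup F] [NormedSpace ℝ F] [CompleteSpace F]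
  {m : MeasurableSpace Ω} {X : Ω → F} {Y : Ω → ℝ}

theorem integral_condExp_smul (hm : m ≤ mΩ) [SigmaFinite (P.trim hm)]
    (hX : StronglyMeasurable[m] X) (hXY : Integrable (fun ω => Y ω • X ω) P)
    (hY : Integrable Y P) : ∫ ω, P[Y | m] ω • X ω ∂P = ∫ ω, Y ω • X ω ∂P := by
  have h_pull : P[fun ω => Y ω • X ω | m] =ᵐ[P] fun ω => P[Y | m] ω • X ω :=
    condExp_bilin_of_stronglyMeasurable_left (ContinuousLinearMap.lsmul ℝ ℝ).flip hX hXY hY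
  rw [← integral_congr_ae h_pull, integral_condExp hm]

theorem integral_smul_eq_zero_of_condExp_eq_zero (hm : m ≤ mΩ) [SigmaFinite (P.trim hm)]
    (hX : StronglyMeasurable[m] X) (hXY : Integrable (fun ω => Y ω • X ω) P)
    (hY : Integrable Y P) (hY0 : P[Y | m] =ᵐ[P] 0) : ∫ ω, Y ω • X ω ∂P = 0 := by
  rw [← integral_condExp_smul hm hX hXY hY]
  exact integral_eq_zero_of_ae (hY0.mono fun ω hω => by simp [hω])

end PullOut

/-- Martingale differences with respect to `ℱ`, uniformly bounded by `C`; the index is shifted so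
that `Y n` is the increment between the times `n` and `n + 1`. -/
structure IsBoundedMartingaleDiff (Y : ℕ → Ω → ℝ) (ℱ : Filtration ℕ mΩ) (P : Measure Ω)
    (C : ℝ≥0) : Prop where
  stronglyMeasurable_succ : ∀ n, StronglyMeasurable[ℱ (n + 1)] (Y n)
  abs_le : ∀ n, ∀ᵐ ω ∂P, |Y n ω| ≤ C
  condExp_eq_zero : ∀ n, P[Y n | ℱ n] =ᵐ[P] 0

theorem isBoundedMartingaleDiff_sub_condExp [IsFiniteMeasure P] {ℱ : Filtration ℕ mΩ}
    {ξ : ℕ → Ω → ℝ} {C : ℝ≥0} (h_meas : ∀ n, StronglyMeasurable[ℱ (n + 1)] (ξ n))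
    (h_bdd : ∀ n, ∀ᵐ ω ∂P, |ξ n ω| ≤ C) :
    IsBoundedMartingaleDiff (fun n => ξ n - P[ξ n | ℱ n]) ℱ P (2 * C) where
  stronglyMeasurable_succ n :=
    (h_meas n).sub (stronglyMeasurable_condExp.mono (ℱ.mono n.le_succ))
  abs_le n := by
    filter_upwards [h_bdd n, ae_bdd_abs_condExp_of_ae_bdd_abs (m := ℱ n) (h_bdd n)]
      with ω hξ h_condExp
    rw [NNReal.coe_mul, NNReal.coe_ofNat, two_mul]
    exact (abs_sub _ _).trans (add_le_add hξ h_condExp)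
  condExp_eq_zero n := by
    have h_int : Integrable (ξ n) P :=
      .of_bound ((h_meas n).mono (ℱ.le _)).aestronglyMeasurable C (h_bdd n)
    refine (condExp_sub h_int integrable_condExp _).trans ?_
    rw [condExp_of_stronglyMeasurable (ℱ.le n) stronglyMeasurable_condExp integrable_condExp,
      sub_self]

namespace IsBoundedMartingaleDiff

variable {Y : ℕ → Ω → ℝ} {ℱ : Filtration ℕ mΩ} {C : ℝ≥0}

theorem mono {C' : ℝ≥0} (h : IsBoundedMartingaleDiff Y ℱ P C) (hC : C ≤ C') :
    IsBoundedMartingaleDiff Y ℱ P C' where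
  __ := h
  abs_le n := (h.abs_le n).mono fun _ hω => hω.trans hC

theorem integrable [IsFiniteMeasure P] (h : IsBoundedMartingaleDiff Y ℱ P C) (n : ℕ) :
    Integrable (Y n) P :=
  .of_bound ((h.stronglyMeasurable_succ n).mono (ℱ.le _)).aestronglyMeasurable C (h.abs_le n)

theorem stronglyMeasurable_sum (h : IsBoundedMartingaleDiff Y ℱ P C) (n : ℕ) :
    StronglyMeasurable[ℱ n] (fun ω => ∑ k ∈ Finset.range n, Y k ω) :=
  Finset.stronglyMeasurable_fun_sum _ fun _ hk =>
    (h.stronglyMeasurable_succ _).mono (ℱ.mono (Finset.mem_range.1 hk))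

theorem abs_sum_le (h : IsBoundedMartingaleDiff Y ℱ P C) (n : ℕ) :
    ∀ᵐ ω ∂P, |∑ k ∈ Finset.range n, Y k ω| ≤ n * C := by
  filter_upwards [ae_all_iff.2 h.abs_le] with ω hω
  calc |∑ k ∈ Finset.range n, Y k ω| ≤ ∑ k ∈ Finset.range n, |Y k ω| :=
        Finset.abs_sum_le_sum_abs _ _
    _ ≤ ∑ _k ∈ Finset.range n, (C : ℝ) := Finset.sum_le_sum fun k _ => hω k
    _ = n * C := by simp

theorem integrable_exp_mul_sum [IsFiniteMeasure P] (h : IsBoundedMartingaleDiff Y ℱ P C) (n : ℕ)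
    (t : ℝ) : Integrable (fun ω => Real.exp (t * ∑ k ∈ Finset.range n, Y k ω)) P := by
  refine .of_bound (Real.continuous_exp.comp_stronglyMeasurable
    (((h.stronglyMeasurable_sum n).mono (ℱ.le n)).const_mul t)).aestronglyMeasurable
    (Real.exp (|t| * (n * C))) ?_
  filter_upwards [h.abs_sum_le n] with ω hω
  rw [Real.norm_of_nonneg (Real.exp_pos _).le]
  refine Real.exp_le_exp.2 ((le_abs_self _).trans ?_)
  rw [abs_mul]
  gcongr

-- Convexity of `exp` on `[-C, C]`.
theorem exp_mul_le_cosh_add (h : IsBoundedMartingaleDiff Y ℱ P C) (n : ℕ) (t : ℝ) :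
    ∀ᵐ ω ∂P, Real.exp (t * Y n ω) ≤ Real.cosh (t * C) + Y n ω / C * Real.sinh (t * C) := by
  filter_upwards [h.abs_le n] with ω hω
  have h_cancel : Y n ω / C * (t * C) = t * Y n ω := by
    have hC : (C : ℝ) = 0 → Y n ω = 0 := fun hC => by rwa [hC, abs_nonpos_iff] at hω
    rw [mul_left_comm, div_mul_cancel_of_imp hC]
  rw [← h_cancel]
  refine Real.exp_mul_le_cosh_add_mul_sinh ?_ _
  rw [abs_div, NNReal.abs_eq]
  exact div_le_one_of_le₀ hω C.coe_nonneg

theorem mgf_sum_succ_le [IsFiniteMeasure P] (h : IsBoundedMartingaleDiff Y ℱ P C) (n : ℕ)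
    (t : ℝ) :
    mgf (fun ω => ∑ k ∈ Finset.range (n + 1), Y k ω) P t
      ≤ Real.cosh (t * C) * mgf (fun ω => ∑ k ∈ Finset.range n, Y k ω) P t := by
  set S : Ω → ℝ := fun ω => ∑ k ∈ Finset.range n, Y k ω
  have hS : StronglyMeasurable[ℱ n] fun ω => Real.exp (t * S ω) :=
    Real.continuous_exp.comp_stronglyMeasurable ((h.stronglyMeasurable_sum n).const_mul t)
  have hYS : Integrable (fun ω => Y n ω • Real.exp (t * S ω)) P :=
    (h.integrable_exp_mul_sum n t).bdd_mul (h.integrable n).aestronglyMeasurable (h.abs_le n)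
  have h_centered : ∫ ω, Y n ω • Real.exp (t * S ω) ∂P = 0 :=
    integral_smul_eq_zero_of_condExp_eq_zero (ℱ.le n) hS hYS (h.integrable n)
      (h.condExp_eq_zero n)
  calc mgf (fun ω => ∑ k ∈ Finset.range (n + 1), Y k ω) P t
      ≤ ∫ ω, (Real.cosh (t * C) * Real.exp (t * S ω)
          + Real.sinh (t * C) / C * (Y n ω • Real.exp (t * S ω))) ∂P := by
        refine integral_mono_ae (h.integrable_exp_mul_sum (n + 1) t)
          (((h.integrable_exp_mul_sum n t).const_mul _).add (hYS.const_mul _)) ?_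
        filter_upwards [h.exp_mul_le_cosh_add n t] with ω hω
        rw [Finset.sum_range_succ, mul_add, Real.exp_add]
        refine (mul_le_mul_of_nonneg_left hω (Real.exp_pos _).le).trans_eq ?_
        rw [smul_eq_mul]
        ring
    _ = Real.cosh (t * C) * mgf S P t := by
        rw [integral_add ((h.integrable_exp_mul_sum n t).const_mul _) (hYS.const_mul _),
          integral_const_mul, integral_const_mul, h_centered, mul_zero, add_zero]
        rfl

theorem hasSubgaussianMGF_sum [IsProbabilityMeasure P] (h : IsBoundedMartingaleDiff Y ℱ P C)
    (n : ℕ) : HasSubgaussianMGF (fun ω => ∑ k ∈ Finset.range n, Y k ω) (n * C ^ 2) P where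
  integrable_exp_mul := h.integrable_exp_mul_sum n
  mgf_le t := by
    induction n with
    | zero => simp [mgf]
    | succ n ih =>
      refine (h.mgf_sum_succ_le n t).trans ?_
      calc Real.cosh (t * C) * mgf (fun ω => ∑ k ∈ Finset.range n, Y k ω) P t
          ≤ Real.exp ((t * C) ^ 2 / 2) * Real.exp (((n * C ^ 2 : ℝ≥0) : ℝ) * t ^ 2 / 2) := by
            gcongr
            · exact mgf_nonneg
            · exact Real.cosh_le_exp_half_sq _
        _ = Real.exp ((((n + 1 : ℕ) * C ^ 2 : ℝ≥0) : ℝ) * t ^ 2 / 2) := by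
            rw [← Real.exp_add]
            push_cast
            ring_nf

theorem neg (h : IsBoundedMartingaleDiff Y ℱ P C) : IsBoundedMartingaleDiff (-Y) ℱ P C where
  stronglyMeasurable_succ n := (h.stronglyMeasurable_succ n).neg
  abs_le n := by simpa using h.abs_le n
  condExp_eq_zero n := by
    filter_upwards [condExp_neg (Y n) (ℱ n), h.condExp_eq_zero n] with ω h_neg h_zero
    simpa [h_zero] using h_neg

theorem measureReal_average_ge_le [IsProbabilityMeasure P] (h : IsBoundedMartingaleDiff Y ℱ P C)
    {ε : ℝ} (hε : 0 ≤ ε) (n : ℕ) :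
    P.real {ω | n * ε ≤ ∑ k ∈ Finset.range n, Y k ω} ≤ Real.exp (-(ε ^ 2 / (2 * C ^ 2))) ^ n := by
  refine ((h.hasSubgaussianMGF_sum n).measure_ge_le (by positivity)).trans_eq ?_
  rw [← Real.exp_nat_mul]
  congr 1
  rcases eq_or_ne n 0 with rfl | hn
  · simp
  · push_cast
    field_simp

theorem ae_eventually_sum_lt [IsProbabilityMeasure P] (h : IsBoundedMartingaleDiff Y ℱ P C)
    {ε : ℝ} (hε : 0 < ε) :
    ∀ᵐ ω ∂P, ∀ᶠ n : ℕ in atTop, ∑ k ∈ Finset.range n, Y k ω < n * ε := by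
  have h' : IsBoundedMartingaleDiff Y ℱ P (C + 1) := h.mono le_self_add
  set r := Real.exp (-(ε ^ 2 / (2 * (C + 1 : ℝ≥0) ^ 2)))
  have hr : r < 1 := Real.exp_lt_one_iff.2 (neg_lt_zero.2 (by positivity))
  have h_sum : ∑' n : ℕ, P {ω | n * ε ≤ ∑ k ∈ Finset.range n, Y k ω} ≠ ⊤ := by
    have h_geom : Summable fun n : ℕ => r ^ n :=
      summable_geometric_of_lt_one (Real.exp_pos _).le hr
    refine ne_top_of_le_ne_top h_geom.tsum_ofReal_ne_top (ENNReal.tsum_le_tsum fun n => ?_)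
    rw [← ofReal_measureReal]
    exact ENNReal.ofReal_le_ofReal (h'.measureReal_average_ge_le hε.le n)
  filter_upwards [ae_eventually_notMem h_sum] with ω hω
  exact hω.mono fun n hn => not_le.1 hn

theorem ae_tendsto_average [IsProbabilityMeasure P] (h : IsBoundedMartingaleDiff Y ℱ P C) :
    ∀ᵐ ω ∂P, Tendsto (fun n : ℕ => (∑ k ∈ Finset.range n, Y k ω) / n) atTop (nhds 0) := by
  have h_eventually (j : ℕ) : ∀ᵐ ω ∂P, ∀ᶠ n : ℕ in atTop,
      |∑ k ∈ Finset.range n, Y k ω| < n * (1 / (j + 1 : ℝ)) := by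
    filter_upwards [h.ae_eventually_sum_lt (ε := 1 / (j + 1 : ℝ)) (by positivity),
      h.neg.ae_eventually_sum_lt (ε := 1 / (j + 1 : ℝ)) (by positivity)] with ω h_upper h_lower
    filter_upwards [h_upper, h_lower] with n hn_upper hn_lower
    refine abs_lt.2 ⟨?_, hn_upper⟩
    simpa [neg_lt] using hn_lower
  filter_upwards [ae_all_iff.2 h_eventually] with ω hω
  refine Metric.tendsto_nhds.2 fun ε hε => ?_
  obtain ⟨j, hj⟩ := exists_nat_one_div_lt hε
  filter_upwards [hω j, eventually_gt_atTop 0] with n hn hn_pos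
  have hn_pos : (0 : ℝ) < n := by exact_mod_cast hn_pos
  rw [Real.dist_0_eq_abs, abs_div, Nat.abs_cast, div_lt_iff₀' hn_pos]
  exact hn.trans (mul_lt_mul_of_pos_left hj hn_pos)

end IsBoundedMartingaleDiff

end MartingaleDiff

/-! ### A martingale central limit theorem -/

theorem norm_sub_pow_mul_le_sum {a : ℕ → ℂ} {ρ : ℂ} {δ : ℕ → ℝ} (hρ : ‖ρ‖ ≤ 1)
    (h : ∀ n, ‖a (n + 1) - ρ * a n‖ ≤ δ n) (n : ℕ) :
    ‖a n - ρ ^ n * a 0‖ ≤ ∑ k ∈ Finset.range n, δ k := by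
  induction n with
  | zero => simp
  | succ n ih =>
    calc ‖a (n + 1) - ρ ^ (n + 1) * a 0‖
        = ‖(a (n + 1) - ρ * a n) + ρ * (a n - ρ ^ n * a 0)‖ := by ring_nf
      _ ≤ ‖a (n + 1) - ρ * a n‖ + ‖ρ‖ * ‖a n - ρ ^ n * a 0‖ := by
        rw [← norm_mul]
        exact norm_add_le _ _
      _ ≤ δ n + 1 * ∑ k ∈ Finset.range n, δ k := by
        gcongr
        exact h n
      _ = ∑ k ∈ Finset.range (n + 1), δ k := by rw [Finset.sum_range_succ, one_mul, add_comm]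

theorem norm_cexp_mul_I_sub_le (x : ℝ) :
    ‖Complex.exp (x * Complex.I) - (1 + x * Complex.I - x ^ 2 / 2)‖ ≤ |x| ^ 3 * Real.exp |x| := by
  have h := Complex.norm_exp_sub_sum_le_norm_mul_exp (x * Complex.I) 3
  simp only [Finset.sum_range_succ, Finset.sum_range_zero, mul_pow, Complex.I_sq, norm_mul,
    Complex.norm_I, mul_one, Complex.norm_real, Real.norm_eq_abs] at h
  convert h using 3
  norm_num
  ring

theorem norm_cexp_neg_sub_one_sub_le (u : ℝ) :
    ‖Complex.exp (-u) - (1 - u)‖ ≤ |u| ^ 2 * Real.exp |u| := by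
  simpa [Finset.sum_range_succ, ← sub_eq_add_neg] using
    Complex.norm_exp_sub_sum_le_norm_mul_exp (-u) 2

section OneStep

variable {Ω : Type*} {m mΩ : MeasurableSpace Ω} {P : Measure Ω} [IsProbabilityMeasure P]
  {X : Ω → ℂ} {Y : Ω → ℝ} {C : ℝ≥0}

-- The linear term vanishes on average, and `Y ^ 2` may be replaced by its conditional expectation.
theorem integral_mul_cexp_sub_eq (hm : m ≤ mΩ) (hX : StronglyMeasurable[m] X)
    (hX_le : ∀ ω, ‖X ω‖ ≤ 1) (hY : AEStronglyMeasurable Y P) (hY_le : ∀ᵐ ω ∂P, |Y ω| ≤ C)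
    (hY0 : P[Y | m] =ᵐ[P] 0) (s v : ℝ) :
    ∫ ω, X ω * Complex.exp ((s * Y ω : ℝ) * Complex.I) ∂P
        - (1 - (s ^ 2 * v / 2 : ℝ)) * ∫ ω, X ω ∂P
      = ∫ ω, X ω * (Complex.exp ((s * Y ω : ℝ) * Complex.I)
          - (1 + (s * Y ω : ℝ) * Complex.I - (s * Y ω : ℝ) ^ 2 / 2)
          - (s ^ 2 / 2 * (P[Y ^ 2 | m] ω - v) : ℝ)) ∂P := by
  have hX_meas : AEStronglyMeasurable X P := (hX.mono hm).aestronglyMeasurable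
  have hX_bdd : ∀ᵐ ω ∂P, ‖X ω‖ ≤ 1 := ae_of_all _ hX_le
  have hX_int : Integrable X P := .of_bound hX_meas 1 hX_bdd
  have hY_int : Integrable Y P := .of_bound hY C hY_le
  have hY2_int : Integrable (Y ^ 2) P := .of_bound (hY.pow 2) (C ^ 2) <| hY_le.mono fun ω hω => by
    rw [Pi.pow_apply, norm_pow]
    exact pow_le_pow_left₀ (norm_nonneg _) hω 2
  have hX_exp : Integrable (fun ω => X ω * Complex.exp ((s * Y ω : ℝ) * Complex.I)) P :=
    hX_int.mul_bdd (c := 1) (by fun_prop)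
      (ae_of_all _ fun ω => (Complex.norm_exp_ofReal_mul_I _).le)
  have hYX : Integrable (fun ω => Y ω • X ω) P := hY_int.smul_bdd 1 hX_meas hX_bdd
  have hY2X : Integrable (fun ω => (Y ^ 2) ω • X ω) P := hY2_int.smul_bdd 1 hX_meas hX_bdd
  have hVX : Integrable (fun ω => P[Y ^ 2 | m] ω • X ω) P :=
    (integrable_condExp (f := Y ^ 2)).smul_bdd 1 hX_meas hX_bdd
  have hdiff : Integrable (fun ω => (Y ^ 2) ω • X ω - P[Y ^ 2 | m] ω • X ω) P := hY2X.sub hVX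
  have h_expand (ω : Ω) : X ω * (Complex.exp ((s * Y ω : ℝ) * Complex.I)
        - (1 + (s * Y ω : ℝ) * Complex.I - (s * Y ω : ℝ) ^ 2 / 2)
        - (s ^ 2 / 2 * (P[Y ^ 2 | m] ω - v) : ℝ))
      = X ω * Complex.exp ((s * Y ω : ℝ) * Complex.I) - (1 - (s ^ 2 * v / 2 : ℝ)) * X ω
        - s * Complex.I * (Y ω • X ω)
        + s ^ 2 / 2 * ((Y ^ 2) ω • X ω - P[Y ^ 2 | m] ω • X ω) := by
    simp only [Complex.real_smul, Pi.pow_apply]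
    push_cast
    ring
  simp_rw [h_expand]
  rw [integral_add ?_ (hdiff.const_mul _), integral_sub ?_ (hYX.const_mul _),
    integral_sub hX_exp (hX_int.const_mul _), integral_const_mul, integral_const_mul,
    integral_const_mul, integral_sub hY2X hVX, integral_condExp_smul hm hX hY2X hY2_int,
    integral_smul_eq_zero_of_condExp_eq_zero hm hX hYX hY_int hY0]
  · ring
  · exact hX_exp.sub (hX_int.const_mul _)
  · exact (hX_exp.sub (hX_int.const_mul _)).sub (hYX.const_mul _)

theorem norm_integral_mul_cexp_sub_le (hm : m ≤ mΩ) (hX : StronglyMeasurable[m] X)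
    (hX_le : ∀ ω, ‖X ω‖ ≤ 1) (hY : AEStronglyMeasurable Y P) (hY_le : ∀ᵐ ω ∂P, |Y ω| ≤ C)
    (hY0 : P[Y | m] =ᵐ[P] 0) (s v : ℝ) :
    ‖∫ ω, X ω * Complex.exp ((s * Y ω : ℝ) * Complex.I) ∂P
        - (1 - (s ^ 2 * v / 2 : ℝ)) * ∫ ω, X ω ∂P‖
      ≤ s ^ 2 / 2 * ∫ ω, |P[Y ^ 2 | m] ω - v| ∂P
        + (|s| * C) ^ 3 * Real.exp (|s| * C) := by
  have hV_int : Integrable (fun ω => |P[Y ^ 2 | m] ω - v|) P :=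
    (integrable_condExp.sub (integrable_const v)).abs
  rw [integral_mul_cexp_sub_eq hm hX hX_le hY hY_le hY0]
  have h_rhs : ∫ ω, (s ^ 2 / 2 * |P[Y ^ 2 | m] ω - v| + (|s| * C) ^ 3 * Real.exp (|s| * C)) ∂P
      = s ^ 2 / 2 * ∫ ω, |P[Y ^ 2 | m] ω - v| ∂P + (|s| * C) ^ 3 * Real.exp (|s| * C) := by
    rw [integral_add (hV_int.const_mul _) (integrable_const _), integral_const_mul, integral_const,
      probReal_univ, one_smul]
  rw [← h_rhs]
  refine norm_integral_le_of_norm_le ((hV_int.const_mul _).add (integrable_const _)) ?_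
  filter_upwards [hY_le] with ω hω
  have h_arg : |s * Y ω| ≤ |s| * C := by
    rw [abs_mul]
    gcongr
  rw [norm_mul]
  refine (mul_le_of_le_one_left (norm_nonneg _) (hX_le ω)).trans ((norm_sub_le _ _).trans ?_)
  rw [Complex.norm_real, Real.norm_eq_abs, abs_mul, abs_of_nonneg (by positivity : 0 ≤ s ^ 2 / 2),
    add_comm]
  gcongr
  exact (norm_cexp_mul_I_sub_le _).trans (by gcongr)

end OneStep

namespace IsBoundedMartingaleDiff

variable {Ω : Type*} {mΩ : MeasurableSpace Ω} {P : Measure Ω} {Y : ℕ → Ω → ℝ}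
  {ℱ : Filtration ℕ mΩ} {C : ℝ≥0}

theorem charFun_map_sum (h : IsBoundedMartingaleDiff Y ℱ P C) (n : ℕ) (s : ℝ) :
    charFun (P.map fun ω => ∑ k ∈ Finset.range n, Y k ω) s
      = ∫ ω, Complex.exp ((s * ∑ k ∈ Finset.range n, Y k ω : ℝ) * Complex.I) ∂P := by
  rw [charFun_apply_real, integral_map
    ((h.stronglyMeasurable_sum n).mono (ℱ.le n)).measurable.aemeasurable (by fun_prop)]
  simp only [Complex.ofReal_mul]

-- Replacing the Taylor factor `1 - s² v / 2` by `exp (-s² v / 2)` makes its powers explicit.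
theorem norm_charFun_map_sum_succ_sub_le [IsProbabilityMeasure P]
    (h : IsBoundedMartingaleDiff Y ℱ P C) (n : ℕ) (s v : ℝ) :
    ‖charFun (P.map fun ω => ∑ k ∈ Finset.range (n + 1), Y k ω) s
        - Complex.exp (-(s ^ 2 * v / 2 : ℝ))
          * charFun (P.map fun ω => ∑ k ∈ Finset.range n, Y k ω) s‖
      ≤ s ^ 2 / 2 * ∫ ω, |P[Y n ^ 2 | ℱ n] ω - v| ∂P + (|s| * C) ^ 3 * Real.exp (|s| * C)
        + |s ^ 2 * v / 2| ^ 2 * Real.exp |s ^ 2 * v / 2| := by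
  set S : Ω → ℝ := fun ω => ∑ k ∈ Finset.range n, Y k ω
  set X : Ω → ℂ := fun ω => Complex.exp ((s * S ω : ℝ) * Complex.I)
  have hX : StronglyMeasurable[ℱ n] X :=
    (by fun_prop : Continuous fun x : ℝ => Complex.exp ((s * x : ℝ) * Complex.I)
      ).comp_stronglyMeasurable (h.stronglyMeasurable_sum n)
  have hX_norm (ω : Ω) : ‖X ω‖ ≤ 1 := (Complex.norm_exp_ofReal_mul_I _).le
  have h_succ : charFun (P.map fun ω => ∑ k ∈ Finset.range (n + 1), Y k ω) s
      = ∫ ω, X ω * Complex.exp ((s * Y n ω : ℝ) * Complex.I) ∂P := by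
    rw [h.charFun_map_sum]
    congr with ω
    rw [Finset.sum_range_succ, ← Complex.exp_add, mul_add, Complex.ofReal_add, add_mul]
  have h_taylor := norm_integral_mul_cexp_sub_le (ℱ.le n) hX hX_norm
    (h.integrable n).aestronglyMeasurable (h.abs_le n) (h.condExp_eq_zero n) s v
  have h_factor : ‖((1 - (s ^ 2 * v / 2 : ℝ)) - Complex.exp (-(s ^ 2 * v / 2 : ℝ))) * ∫ ω, X ω ∂P‖
      ≤ |s ^ 2 * v / 2| ^ 2 * Real.exp |s ^ 2 * v / 2| := by
    rw [norm_mul, norm_sub_rev]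
    refine (mul_le_of_le_one_right (norm_nonneg _) ?_).trans (norm_cexp_neg_sub_one_sub_le _)
    simpa using norm_integral_le_of_norm_le_const (ae_of_all P hX_norm)
  rw [h_succ, h.charFun_map_sum]
  refine le_of_eq_of_le (congrArg norm ?_) ((norm_add_le _ _).trans (add_le_add h_taylor h_factor))
  rw [sub_mul _ (Complex.exp _), sub_add_sub_cancel]

theorem norm_charFun_map_sum_sub_le [IsProbabilityMeasure P]
    (h : IsBoundedMartingaleDiff Y ℱ P C) (n : ℕ) (s : ℝ) (v : ℝ≥0) :
    ‖charFun (P.map fun ω => ∑ k ∈ Finset.range n, Y k ω) s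
        - Complex.exp (-(n * s ^ 2 * v / 2 : ℝ))‖
      ≤ n * s ^ 2 * ((n : ℝ)⁻¹ * (∑ k ∈ Finset.range n, ∫ ω, |P[Y k ^ 2 | ℱ k] ω - (v : ℝ)| ∂P) / 2
        + |s| * C ^ 3 * Real.exp (|s| * C) + s ^ 2 * (v / 2) ^ 2 * Real.exp (s ^ 2 * v / 2)) := by
  have h_norm : ‖Complex.exp (-(s ^ 2 * v / 2 : ℝ))‖ ≤ 1 := by
    rw [← Complex.ofReal_neg, Complex.norm_exp_ofReal]
    exact Real.exp_le_one_iff.2 (neg_nonpos.2 (by positivity))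
  have h_sum := norm_sub_pow_mul_le_sum
    (a := fun k => charFun (P.map fun ω => ∑ j ∈ Finset.range k, Y j ω) s) h_norm
    (fun k => h.norm_charFun_map_sum_succ_sub_le k s v) n
  have h_pow : Complex.exp (-(s ^ 2 * v / 2 : ℝ)) ^ n = Complex.exp (-(n * s ^ 2 * v / 2 : ℝ)) := by
    rw [← Complex.exp_nat_mul]
    push_cast
    ring_nf
  have h_zero : charFun (P.map fun ω => ∑ k ∈ Finset.range 0, Y k ω) s = 1 := by simp
  rw [h_pow, h_zero, mul_one] at h_sum
  refine h_sum.trans_eq ?_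
  rcases eq_or_ne n 0 with rfl | hn
  · simp
  rw [Finset.sum_add_distrib, Finset.sum_add_distrib, ← Finset.mul_sum, Finset.sum_const,
    Finset.sum_const, Finset.card_range, nsmul_eq_mul, nsmul_eq_mul,
    abs_of_nonneg (by positivity : 0 ≤ s ^ 2 * v / 2), mul_pow, pow_succ |s|, sq_abs]
  field_simp

theorem tendsto_integral_abs_condExp_sq_sub [IsFiniteMeasure P]
    (h : IsBoundedMartingaleDiff Y ℱ P C) {v : ℝ}
    (hv : ∀ᵐ ω ∂P, Tendsto (fun n => P[Y n ^ 2 | ℱ n] ω) atTop (nhds v)) :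
    Tendsto (fun n => ∫ ω, |P[Y n ^ 2 | ℱ n] ω - v| ∂P) atTop (nhds 0) := by
  have h_bdd (n : ℕ) : ∀ᵐ ω ∂P, |P[Y n ^ 2 | ℱ n] ω| ≤ ((C ^ 2 : ℝ≥0) : ℝ) := by
    refine ae_bdd_abs_condExp_of_ae_bdd_abs ((h.abs_le n).mono fun ω hω => ?_)
    rw [Pi.pow_apply, abs_pow, NNReal.coe_pow]
    exact pow_le_pow_left₀ (abs_nonneg _) hω 2
  have h_lim := tendsto_integral_of_dominated_convergence (μ := P)
    (F := fun n ω => |P[Y n ^ 2 | ℱ n] ω - v|) (f := fun _ => 0)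
    (fun _ => ((C ^ 2 : ℝ≥0) : ℝ) + |v|)
    (fun n => (integrable_condExp.sub (integrable_const v)).abs.aestronglyMeasurable)
    (integrable_const _)
    (fun n => (h_bdd n).mono fun ω hω => by
      rw [Real.norm_eq_abs, abs_abs]
      exact (abs_sub _ _).trans (by gcongr))
    (hv.mono fun ω hω => by simpa using (hω.sub_const v).abs)
  simpa using h_lim

theorem tendsto_charFun_inv_sqrt_mul_sum [IsProbabilityMeasure P]
    (h : IsBoundedMartingaleDiff Y ℱ P C) {v : ℝ≥0}
    (hv : ∀ᵐ ω ∂P, Tendsto (fun n => P[Y n ^ 2 | ℱ n] ω) atTop (nhds (v : ℝ))) (t : ℝ) :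
    Tendsto (fun n : ℕ => charFun (P.map fun ω => ∑ k ∈ Finset.range n, Y k ω) ((√n)⁻¹ * t))
      atTop (nhds (charFun (gaussianReal 0 v) t)) := by
  have hs : Tendsto (fun n : ℕ => (√n)⁻¹ * t) atTop (nhds 0) := by
    simpa using (tendsto_inv_atTop_zero.comp
      (Real.tendsto_sqrt_atTop.comp tendsto_natCast_atTop_atTop)).mul_const t
  have h_error : Tendsto (fun s : ℝ => |s| * C ^ 3 * Real.exp (|s| * C)
      + s ^ 2 * (v / 2) ^ 2 * Real.exp (s ^ 2 * v / 2)) (nhds 0) (nhds 0) :=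
    Continuous.tendsto' (by fun_prop) _ _ (by simp)
  have h_bound := ((((h.tendsto_integral_abs_condExp_sq_sub hv).cesaro).div_const 2).add
    (h_error.comp hs)).const_mul (t ^ 2)
  rw [zero_div, add_zero, mul_zero] at h_bound
  rw [tendsto_iff_norm_sub_tendsto_zero]
  refine squeeze_zero' (Eventually.of_forall fun _ => norm_nonneg _) ?_ h_bound
  filter_upwards [eventually_ne_atTop 0] with n hn
  have hs_sq : n * ((√n)⁻¹ * t) ^ 2 = t ^ 2 := by
    rw [mul_pow, inv_pow, Real.sq_sqrt n.cast_nonneg, mul_inv_cancel_left₀ (by exact_mod_cast hn)]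
  have h_le := h.norm_charFun_map_sum_sub_le n ((√n)⁻¹ * t) v
  rw [hs_sq, add_assoc] at h_le
  refine le_of_eq_of_le ?_ h_le
  rw [charFun_gaussianReal]
  congr 3
  push_cast
  ring

theorem tendstoInDistribution_inv_sqrt_mul_sum [IsProbabilityMeasure P]
    {Ω' : Type*} [MeasurableSpace Ω'] {P' : Measure Ω'} [IsProbabilityMeasure P'] {Z : Ω' → ℝ}
    (h : IsBoundedMartingaleDiff Y ℱ P C) {v : ℝ≥0}
    (hv : ∀ᵐ ω ∂P, Tendsto (fun n => P[Y n ^ 2 | ℱ n] ω) atTop (nhds (v : ℝ)))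
    (hZ : HasLaw Z (gaussianReal 0 v) P') :
    TendstoInDistribution (fun (n : ℕ) ω => (√n)⁻¹ * ∑ k ∈ Finset.range n, Y k ω) atTop Z
      (fun _ => P) P' where
  forall_aemeasurable n :=
    (((h.stronglyMeasurable_sum n).mono (ℱ.le n)).measurable.const_mul _).aemeasurable
  tendsto := by
    refine ProbabilityMeasure.tendsto_iff_tendsto_charFun.2 fun t => ?_
    rw! [hZ.map_eq]
    refine (h.tendsto_charFun_inv_sqrt_mul_sum hv t).congr fun n => ?_
    rw [ProbabilityMeasure.coe_mk, ← charFun_map_mul, Measure.map_map (by fun_prop)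
      ((h.stronglyMeasurable_sum n).mono (ℱ.le n)).measurable]
    rfl

end IsBoundedMartingaleDiff

theorem tendstoInDistribution_sum_sub_condExp_of_sq_eq_one
    {Ω : Type*} {mΩ : MeasurableSpace Ω} {P : Measure Ω} [IsProbabilityMeasure P]
    {Ω' : Type*} [MeasurableSpace Ω'] {P' : Measure Ω'} [IsProbabilityMeasure P']
    {ℱ : Filtration ℕ mΩ} {ξ : ℕ → Ω → ℝ} {b : ℝ} {v : ℝ≥0} {Z : Ω' → ℝ}
    (h_meas : ∀ n, StronglyMeasurable[ℱ (n + 1)] (ξ n)) (h_sq : ∀ n, ξ n ^ 2 = 1)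
    (h_lim : ∀ᵐ ω ∂P, Tendsto (fun n => P[ξ n | ℱ n] ω) atTop (nhds b))
    (hv : v = 1 - b ^ 2) (hZ : HasLaw Z (gaussianReal 0 v) P') :
    TendstoInDistribution
      (fun (n : ℕ) ω => (√n)⁻¹ * ∑ k ∈ Finset.range n, (ξ k ω - P[ξ k | ℱ k] ω)) atTop Z
      (fun _ => P) P' := by
  have h_abs (n : ℕ) : ∀ᵐ ω ∂P, |ξ n ω| ≤ (1 : ℝ≥0) :=
    ae_of_all _ fun ω => (sq_le_one_iff_abs_le_one _).1 (congrFun (h_sq n) ω).le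
  have h_var (n : ℕ) : Var[ξ n; P | ℱ n] =ᵐ[P] 1 - P[ξ n | ℱ n] ^ 2 := by
    have h_memLp : MemLp (ξ n) 2 P :=
      .of_bound ((h_meas n).mono (ℱ.le _)).aestronglyMeasurable 1 (h_abs n)
    have h_one : P[ξ n ^ 2 | ℱ n] = 1 := by
      rw [h_sq]
      exact condExp_const (ℱ.le n) 1
    rw [← h_one]
    exact condVar_ae_eq_condExp_sq_sub_sq_condExp (ℱ.le n) h_memLp
  have h_var_lim : ∀ᵐ ω ∂P, Tendsto (fun n => Var[ξ n; P | ℱ n] ω) atTop (nhds (v : ℝ)) := by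
    rw [hv]
    filter_upwards [ae_all_iff.2 h_var, h_lim] with ω hω h_lim_ω
    refine ((h_lim_ω.pow 2).const_sub 1).congr fun n => ?_
    rw [hω n]
    rfl
  exact (isBoundedMartingaleDiff_sub_condExp h_meas h_abs).tendstoInDistribution_inv_sqrt_mul_sum
    h_var_lim hZ

/-! ### Geodesics in graphs and trees -/

theorem eq_of_adj_of_dist_add_one_eq {V : Type*} {T : SimpleGraph V} (hT : T.IsTree)
    {o x y z : V} (hy : T.Adj y x) (hz : T.Adj z x) (hy_dist : T.dist o y + 1 = T.dist o x)
    (hz_dist : T.dist o z + 1 = T.dist o x) : y = z := by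
  obtain ⟨q, hq⟩ := (hT.connected o y).exists_walk_length_eq_dist
  obtain ⟨r, hr⟩ := (hT.connected o z).exists_walk_length_eq_dist
  have hq_path : (q.concat hy).IsPath :=
    SimpleGraph.Walk.isPath_of_length_eq_dist _
      (by rw [SimpleGraph.Walk.length_concat, hq, hy_dist])
  have hr_path : (r.concat hz).IsPath :=
    SimpleGraph.Walk.isPath_of_length_eq_dist _
      (by rw [SimpleGraph.Walk.length_concat, hr, hz_dist])
  have h_eq : q.concat hy = r.concat hz :=
    congrArg Subtype.val ((hT.isAcyclic.subsingleton_path o x).elim ⟨_, hq_path⟩ ⟨_, hr_path⟩)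
  simpa using congrArg SimpleGraph.Walk.penultimate h_eq

theorem exists_adj_dist_add_one_eq {V : Type*} {T : SimpleGraph V} (hT : T.Connected) {o x : V}
    (hx : x ≠ o) : ∃ y, T.Adj x y ∧ T.dist o y + 1 = T.dist o x := by
  obtain ⟨w, hw⟩ := (hT x o).exists_walk_length_eq_dist
  cases w with
  | nil => exact absurd rfl hx
  | @cons _ y _ hxy q =>
    have h_le : T.dist o y ≤ q.length := SimpleGraph.dist_comm (G := T) ▸ SimpleGraph.dist_le q
    rw [SimpleGraph.Walk.length_cons, SimpleGraph.dist_comm] at hw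
    refine ⟨y, hxy, ?_⟩
    rcases hxy.diff_dist_adj (u := o) with h | h | h <;> omega

/-! ### Conditional expectation given a discrete random variable -/

theorem ae_eq_condExp_comap_of_forall_fiber {Ω β F : Type*} [mβ : MeasurableSpace β] [Countable β]
    [MeasurableSingletonClass β] [NormedAddCommGroup F] [NormedSpace ℝ F] [CompleteSpace F]
    {mΩ : MeasurableSpace Ω} {P : Measure Ω} [IsFiniteMeasure P] {X : Ω → β} {f f' : Ω → F}
    (hX : Measurable X) (hf : Integrable f P) (hf' : Integrable f' P)
    (hf'_meas : StronglyMeasurable[mβ.comap X] f')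
    (h_fiber : ∀ ω₀, ∫ ω in X ⁻¹' {X ω₀}, f' ω ∂P = ∫ ω in X ⁻¹' {X ω₀}, f ω ∂P) :
    f' =ᵐ[P] P[f | mβ.comap X] := by
  refine ae_eq_condExp_of_forall_setIntegral_eq hX.comap_le hf (fun _ _ _ => hf'.integrableOn) ?_
    hf'_meas.aestronglyMeasurable
  rintro _ ⟨t, -, rfl⟩ -
  have h_sum {h : Ω → F} (hh : Integrable h P) :
      ∫ ω in X ⁻¹' t, h ω ∂P = ∑' b : t, ∫ ω in X ⁻¹' {(b : β)}, h ω ∂P := by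
    rw [← Set.biUnion_preimage_singleton X t, Set.biUnion_eq_iUnion]
    exact integral_iUnion (fun b => hX (measurableSet_singleton _))
      (fun b c hbc => Disjoint.preimage X (by simpa [Subtype.ext_iff] using hbc)) hh.integrableOn
  rw [h_sum hf', h_sum hf]
  refine tsum_congr fun b => ?_
  rcases (X ⁻¹' {(b : β)}).eq_empty_or_nonempty with h_empty | ⟨ω₀, hω₀⟩
  · simp only [h_empty, Measure.restrict_empty, integral_zero_measure]
  · rw [← (hω₀ : X ω₀ = b)]
    exact h_fiber ω₀

namespace ERW

variable {G : Type*} [Group G] [DecidableEq G] {d : ℕ} {p : ℝ}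
  {Ω : Type*} [mΩ : MeasurableSpace Ω] {P : Measure Ω}

/-! ### The distance process -/

theorem adj_mul_left (E : ERW G d p Ω P) {s : G} (hs : s ∈ E.S) (x : G) :
    (cayleyGraph E.S).Adj x (s * x) := by
  refine ⟨fun h => E.one_not_mem ?_, Or.inl (by rwa [mul_inv_cancel_right])⟩
  rwa [← (right_eq_mul.1 h : s = 1)]

theorem mul_inv_mem_of_adj (E : ERW G d p Ω P) {x y : G} (h : (cayleyGraph E.S).Adj x y) :
    y * x⁻¹ ∈ E.S :=
  h.2.elim id fun h' => by simpa using E.symm_S _ h'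

theorem gammaStep_spec (E : ERW G d p Ω P) {n : ℕ} {ω : Ω} (h : E.pos n ω ≠ 1) :
    E.gammaStep n ω ∈ E.S ∧
      (cayleyGraph E.S).dist 1 (E.gammaStep n ω * E.pos n ω) + 1 = E.dist n ω := by
  obtain ⟨y, hy_adj, hy_dist⟩ := exists_adj_dist_add_one_eq E.tree.connected h
  refine Classical.epsilon_spec (p := fun s => s ∈ E.S ∧
    (cayleyGraph E.S).dist 1 (s * E.pos n ω) + 1 = E.dist n ω)
    ⟨y * (E.pos n ω)⁻¹, E.mul_inv_mem_of_adj hy_adj, ?_⟩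
  rwa [inv_mul_cancel_right]

theorem dist_zero (E : ERW G d p Ω P) (ω : Ω) : E.dist 0 ω = 0 :=
  SimpleGraph.dist_self

theorem dist_pos_iff (E : ERW G d p Ω P) {n : ℕ} {ω : Ω} :
    0 < E.dist n ω ↔ E.pos n ω ≠ 1 := by
  rw [Nat.pos_iff_ne_zero, Ne, dist, E.tree.connected.dist_eq_zero_iff, eq_comm]

theorem dist_succ_eq_or (E : ERW G d p Ω P) (n : ℕ) (ω : Ω) :
    E.dist n ω = E.dist (n + 1) ω + 1 ∨ E.dist (n + 1) ω = E.dist n ω + 1 :=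
  E.tree.dist_eq_dist_add_one_of_adj 1 (E.adj_mul_left (E.mem_S (n + 1) (by omega) ω) _)

theorem dist_succ_add_one_eq_iff (E : ERW G d p Ω P) {n : ℕ} {ω : Ω} :
    E.dist (n + 1) ω + 1 = E.dist n ω ↔
      E.pos n ω ≠ 1 ∧ E.g (n + 1) ω = E.gammaStep n ω := by
  constructor
  · intro h
    have h_pos : E.pos n ω ≠ 1 := E.dist_pos_iff.1 (by omega)
    obtain ⟨hγ_mem, hγ_dist⟩ := E.gammaStep_spec h_pos
    exact ⟨h_pos, mul_right_cancel <| eq_of_adj_of_dist_add_one_eq E.tree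
      (E.adj_mul_left (E.mem_S (n + 1) (by omega) ω) _).symm (E.adj_mul_left hγ_mem _).symm
      h hγ_dist⟩
  · rintro ⟨h_pos, hg⟩
    rw [← (E.gammaStep_spec h_pos).2, ← hg]
    rfl

/-- The increment `Δ (n+1) - Δ n` of the distance to the root, as a real number. -/
def increment (E : ERW G d p Ω P) (n : ℕ) (ω : Ω) : ℝ :=
  E.dist (n + 1) ω - E.dist n ω

theorem increment_eq (E : ERW G d p Ω P) (n : ℕ) (ω : Ω) :
    E.increment n ω
      = 1 - 2 * if E.pos n ω ≠ 1 ∧ E.g (n + 1) ω = E.gammaStep n ω then 1 else 0 := by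
  simp only [increment, ← E.dist_succ_add_one_eq_iff]
  split_ifs with h
  · rw [← h]
    push_cast
    ring
  · rw [(E.dist_succ_eq_or n ω).resolve_left (Ne.symm h)]
    push_cast
    ring

theorem increment_sq (E : ERW G d p Ω P) (n : ℕ) : E.increment n ^ 2 = 1 := by
  ext ω
  rw [Pi.pow_apply, increment_eq]
  split_ifs <;> norm_num

theorem sum_increment (E : ERW G d p Ω P) (n : ℕ) (ω : Ω) :
    ∑ k ∈ Finset.range n, E.increment k ω = E.dist n ω := by
  simp only [increment, Finset.sum_range_sub fun k => (E.dist k ω : ℝ), dist_zero, Nat.cast_zero,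
    sub_zero]

/-! ### The filtration of the walk -/

/-- The steps `g 1, …, g n`. It takes values in a finite set, so that `filt n`, the σ-algebra it
generates, is atomic. -/
def history (E : ERW G d p Ω P) (n : ℕ) (ω : Ω) : Finset.Icc 1 n → E.S :=
  fun k => ⟨E.g k ω, E.mem_S k (Finset.mem_Icc.1 k.2).1 ω⟩

theorem history_eq_iff (E : ERW G d p Ω P) {n : ℕ} {ω ω' : Ω} :
    E.history n ω = E.history n ω' ↔ ∀ k ∈ Finset.Icc 1 n, E.g k ω = E.g k ω' := by
  simp only [history, funext_iff, Subtype.mk.injEq, Subtype.forall]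

theorem g_factorsThrough_history (E : ERW G d p Ω P) {k n : ℕ} (hk : k ∈ Finset.Icc 1 n) :
    (E.g k).FactorsThrough (E.history n) :=
  fun _ _ h => E.history_eq_iff.1 h k hk

theorem history_factorsThrough_history (E : ERW G d p Ω P) {m n : ℕ} (hmn : m ≤ n) :
    (E.history m).FactorsThrough (E.history n) :=
  fun _ _ h => E.history_eq_iff.2 fun k hk =>
    E.history_eq_iff.1 h k (Finset.Icc_subset_Icc_right hmn hk)

theorem filt_eq_comap_history (E : ERW G d p Ω P) (n : ℕ) :
    E.filt n = MeasurableSpace.comap (E.history n) ⊤ := by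
  have h_top : (⊤ : MeasurableSpace (Finset.Icc 1 n → E.S))
      = @MeasurableSpace.pi _ _ fun _ => ⊤ := by
    let _ : MeasurableSpace E.S := ⊤
    exact (eq_top_iff.2 fun s _ => .of_discrete).symm
  have h_val : MeasurableSpace.comap (Subtype.val : E.S → G) ⊤ = ⊤ :=
    eq_top_iff.2 fun s _ =>
      ⟨Subtype.val '' s, trivial, Set.preimage_image_eq s Subtype.val_injective⟩
  simp only [h_top, MeasurableSpace.pi, MeasurableSpace.comap_iSup, filt, iSup_subtype', ← h_val,
    MeasurableSpace.comap_comp]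
  rfl

theorem measurable_history (E : ERW G d p Ω P) (n : ℕ) :
    Measurable[mΩ, ⊤] (E.history n) := by
  refine @measurable_to_countable' _ _ ⊤ _ _ _ fun h => ?_
  have h_preimage : E.history n ⁻¹' {h} = ⋂ k : Finset.Icc 1 n, {ω | E.g k ω = h k} := by
    ext ω
    simp only [history, Set.mem_preimage, Set.mem_singleton_iff, funext_iff, Subtype.ext_iff,
      Set.mem_iInter, Set.mem_ofPred_eq]
  rw [h_preimage]
  exact .iInter fun k => E.meas_g k (h k)

theorem measurable_filt_of_factorsThrough (E : ERW G d p Ω P) {n : ℕ} {β : Type*}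
    [MeasurableSpace β] [Nonempty β] {X : Ω → β} (hX : X.FactorsThrough (E.history n)) :
    Measurable[E.filt n] X := by
  obtain ⟨e, rfl⟩ := (Function.factorsThrough_iff X).1 hX
  rw [filt_eq_comap_history]
  exact measurable_from_top.comp (comap_measurable _)

theorem filt_le (E : ERW G d p Ω P) (n : ℕ) : E.filt n ≤ mΩ := by
  rw [filt_eq_comap_history]
  exact (E.measurable_history n).comap_le

/-- The natural filtration of the steps, bundled from `filt`. -/
def filtration (E : ERW G d p Ω P) : Filtration ℕ mΩ where
  seq := E.filt
  mono' _ _ h := biSup_mono fun _ hk => Finset.Icc_subset_Icc_right h hk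
  le' := E.filt_le

theorem integrable_of_factorsThrough [IsFiniteMeasure P] (E : ERW G d p Ω P) {n : ℕ}
    {X : Ω → ℝ} (hX : X.FactorsThrough (E.history n)) : Integrable X P := by
  have hX_meas : AEStronglyMeasurable X P :=
    ((E.measurable_filt_of_factorsThrough hX).mono (E.filt_le n) le_rfl).aestronglyMeasurable
  obtain ⟨e, rfl⟩ := (Function.factorsThrough_iff X).1 hX
  obtain ⟨K, hK⟩ := isBounded_iff_forall_norm_le.1 (Set.finite_range e).isBounded
  exact .of_bound hX_meas K (ae_of_all _ fun ω => hK _ ⟨_, rfl⟩)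

theorem pos_factorsThrough_history (E : ERW G d p Ω P) (n : ℕ) :
    (E.pos n).FactorsThrough (E.history n) := by
  induction n with
  | zero => exact fun _ _ _ => rfl
  | succ n ih =>
    exact fun ω ω' h => congrArg₂ (· * ·)
      (E.g_factorsThrough_history (Finset.mem_Icc.2 ⟨by omega, le_rfl⟩) h)
      (ih (E.history_factorsThrough_history n.le_succ h))

theorem dist_factorsThrough_history (E : ERW G d p Ω P) (n : ℕ) :
    (E.dist n).FactorsThrough (E.history n) :=
  fun _ _ h => congrArg ((cayleyGraph E.S).dist 1) (E.pos_factorsThrough_history n h)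

theorem gammaStep_factorsThrough_history (E : ERW G d p Ω P) (n : ℕ) :
    (E.gammaStep n).FactorsThrough (E.history n) := fun ω ω' h => by
  simp only [gammaStep, E.dist_factorsThrough_history n h, E.pos_factorsThrough_history n h]

theorem count_factorsThrough_history (E : ERW G d p Ω P) (a : G) (n : ℕ) :
    (E.count a n).FactorsThrough (E.history n) := fun ω ω' h =>
  congrArg Finset.card (Finset.filter_congr fun k hk => by
    rw [E.g_factorsThrough_history hk h])

theorem increment_factorsThrough_history (E : ERW G d p Ω P) (n : ℕ) :
    (E.increment n).FactorsThrough (E.history (n + 1)) := fun ω ω' h => by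
  simp only [increment, E.dist_factorsThrough_history (n + 1) h,
    E.dist_factorsThrough_history n (E.history_factorsThrough_history n.le_succ h)]

/-! ### Frequencies of the steps -/

/-- The deviation `N n a / n - 1/d` of the empirical frequency of the step `a` from the uniform
one, written so that it vanishes at `n = 0`. -/
def freqDev (E : ERW G d p Ω P) (a : G) (n : ℕ) (ω : Ω) : ℝ :=
  (E.count a n ω - n / d) / n

/-- The conditional probability `p N/n + (1-p)/(d-1) (n-N)/n` of `g (n+1) = a` given the first `n`
steps, where `N = N n a`. It is affine in `freqDev`, and this form also covers `n = 0`. -/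
def stepProb (E : ERW G d p Ω P) (a : G) (n : ℕ) (ω : Ω) : ℝ :=
  1 / d + (p * d - 1) / ((d : ℝ) - 1) * E.freqDev a n ω

theorem freqDev_eq (E : ERW G d p Ω P) (a : G) {n : ℕ} (hn : n ≠ 0) (ω : Ω) :
    E.freqDev a n ω = E.count a n ω / n - 1 / d := by
  have hn' : (n : ℝ) ≠ 0 := Nat.cast_ne_zero.2 hn
  rw [freqDev, sub_div, div_right_comm, div_self hn']

theorem mul_freqDev (E : ERW G d p Ω P) (a : G) (n : ℕ) (ω : Ω) :
    n * E.freqDev a n ω = E.count a n ω - n / d := by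
  refine mul_div_cancel_of_imp' fun hn => ?_
  obtain rfl : n = 0 := Nat.cast_eq_zero.1 hn
  simp [count]

theorem stepProb_eq (hd : 2 ≤ d) (E : ERW G d p Ω P) (a : G) {n : ℕ} (hn : n ≠ 0) (ω : Ω) :
    E.stepProb a n ω = p * ((E.count a n ω : ℝ) / n)
      + (1 - p) / ((d : ℝ) - 1) * (((n : ℝ) - (E.count a n ω : ℝ)) / n) := by
  have hd' : (2 : ℝ) ≤ d := mod_cast hd
  have hd0 : (d : ℝ) ≠ 0 := by linarith
  have hd1 : (d : ℝ) - 1 ≠ 0 := by linarith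
  have hn' : (n : ℝ) ≠ 0 := Nat.cast_ne_zero.2 hn
  rw [stepProb, freqDev]
  field_simp
  ring

theorem freqDev_factorsThrough_history (E : ERW G d p Ω P) (a : G) (n : ℕ) :
    (E.freqDev a n).FactorsThrough (E.history n) := fun _ _ h => by
  rw [freqDev, freqDev, E.count_factorsThrough_history a n h]

theorem stepProb_factorsThrough_history (E : ERW G d p Ω P) (a : G) (n : ℕ) :
    (E.stepProb a n).FactorsThrough (E.history n) := fun _ _ h => by
  rw [stepProb, stepProb, E.freqDev_factorsThrough_history a n h]

/-- The indicator of the event `g (n+1) = a`. -/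
def stepIndicator (E : ERW G d p Ω P) (a : G) (n : ℕ) : Ω → ℝ :=
  {ω | E.g (n + 1) ω = a}.indicator 1

theorem stepIndicator_apply (E : ERW G d p Ω P) (a : G) (n : ℕ) (ω : Ω) :
    E.stepIndicator a n ω = if E.g (n + 1) ω = a then 1 else 0 := by
  simp only [stepIndicator, Set.indicator_apply, Set.mem_ofPred_eq, Pi.one_apply]

theorem abs_stepIndicator_le (E : ERW G d p Ω P) (a : G) (n : ℕ) (ω : Ω) :
    |E.stepIndicator a n ω| ≤ 1 := by
  rw [stepIndicator_apply]
  split_ifs <;> norm_num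

theorem stepIndicator_factorsThrough_history (E : ERW G d p Ω P) (a : G) (n : ℕ) :
    (E.stepIndicator a n).FactorsThrough (E.history (n + 1)) := fun _ _ h => by
  rw [stepIndicator_apply, stepIndicator_apply,
    E.g_factorsThrough_history (Finset.mem_Icc.2 ⟨by omega, le_rfl⟩) h]

theorem count_eq_sum_stepIndicator (E : ERW G d p Ω P) (a : G) (n : ℕ) (ω : Ω) :
    (E.count a n ω : ℝ) = ∑ k ∈ Finset.range n, E.stepIndicator a k ω := by
  simp only [count, stepIndicator_apply, Finset.card_filter, Nat.cast_sum, Nat.cast_ite,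
    Nat.cast_one, Nat.cast_zero, Finset.range_eq_Ico, Finset.sum_Ico_add' (c := 1)
      (f := fun k => if E.g k ω = a then (1 : ℝ) else 0)]
  rfl

theorem measureReal_fiber_inter (hd : 2 ≤ d) [IsProbabilityMeasure P] (E : ERW G d p Ω P)
    {a : G} (ha : a ∈ E.S) (n : ℕ) (ω₀ : Ω) :
    P.real (E.history n ⁻¹' {E.history n ω₀} ∩ {ω | E.g (n + 1) ω = a})
      = E.stepProb a n ω₀ * P.real (E.history n ⁻¹' {E.history n ω₀}) := by
  have h_fiber : E.history n ⁻¹' {E.history n ω₀}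
      = {ω | ∀ k ∈ Finset.Icc 1 n, E.g k ω = E.g k ω₀} := Set.ext fun ω => E.history_eq_iff
  rw [h_fiber]
  rcases n.eq_zero_or_pos with rfl | hn
  · simpa [stepProb, freqDev, Measure.real] using E.init a ha
  · rw [E.stepProb_eq hd a hn.ne']
    exact E.update n hn (fun k => E.g k ω₀) a ha

theorem condExp_stepIndicator (hd : 2 ≤ d) [IsProbabilityMeasure P] (E : ERW G d p Ω P)
    {a : G} (ha : a ∈ E.S) (n : ℕ) :
    P[E.stepIndicator a n | E.filt n] =ᵐ[P] E.stepProb a n := by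
  have h_meas := (E.measurable_filt_of_factorsThrough
    (E.stepProb_factorsThrough_history a n)).stronglyMeasurable
  rw [filt_eq_comap_history] at h_meas ⊢
  let _ : MeasurableSpace (Finset.Icc 1 n → E.S) := ⊤
  refine (ae_eq_condExp_comap_of_forall_fiber (E.measurable_history n)
    (E.integrable_of_factorsThrough (E.stepIndicator_factorsThrough_history a n))
    (E.integrable_of_factorsThrough (E.stepProb_factorsThrough_history a n)) h_meas
    fun ω₀ => ?_).symm
  have h_fiber : MeasurableSet (E.history n ⁻¹' {E.history n ω₀}) :=
    E.measurable_history n (measurableSet_singleton _)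
  calc ∫ ω in E.history n ⁻¹' {E.history n ω₀}, E.stepProb a n ω ∂P
      = ∫ _ω in E.history n ⁻¹' {E.history n ω₀}, E.stepProb a n ω₀ ∂P :=
        setIntegral_congr_fun h_fiber fun ω hω => E.stepProb_factorsThrough_history a n hω
    _ = P.real (E.history n ⁻¹' {E.history n ω₀} ∩ {ω | E.g (n + 1) ω = a}) := by
        rw [setIntegral_const, smul_eq_mul, mul_comm, E.measureReal_fiber_inter hd ha]
    _ = ∫ ω in E.history n ⁻¹' {E.history n ω₀}, E.stepIndicator a n ω ∂P := by
        rw [stepIndicator, setIntegral_indicator (E.meas_g _ _)]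
        simp only [Pi.one_apply, setIntegral_const, smul_eq_mul, mul_one]

theorem count_le (E : ERW G d p Ω P) (a : G) (n : ℕ) (ω : Ω) : E.count a n ω ≤ n :=
  (Finset.card_filter_le _ _).trans (by rw [Nat.card_Icc, Nat.add_sub_cancel])

theorem abs_freqDev_le (E : ERW G d p Ω P) (a : G) (n : ℕ) (ω : Ω) :
    |E.freqDev a n ω| ≤ 1 := by
  have h_count : (E.count a n ω : ℝ) ≤ n := mod_cast E.count_le a n ω
  have h_unif : (n : ℝ) / d ≤ n := by
    rcases d.eq_zero_or_pos with rfl | hd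
    · simp
    · exact div_le_self n.cast_nonneg (mod_cast hd)
  rw [freqDev, abs_div, Nat.abs_cast]
  refine div_le_one_of_le₀ (abs_le.2 ⟨?_, ?_⟩) n.cast_nonneg
  · linarith [(E.count a n ω).cast_nonneg (α := ℝ)]
  · linarith [show (0 : ℝ) ≤ n / d by positivity]

theorem abs_memory_lt_one (hd : 3 ≤ d) (hp0 : 0 ≤ p) (hp1 : p < 1) :
    |(p * d - 1) / ((d : ℝ) - 1)| < 1 := by
  have hd' : (3 : ℝ) ≤ d := mod_cast hd
  rw [abs_div, abs_of_pos (by linarith : 0 < (d : ℝ) - 1), div_lt_one (by linarith), abs_lt]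
  constructor <;> nlinarith

theorem mul_freqDev_eq (E : ERW G d p Ω P) (a : G) (n : ℕ) (ω : Ω) :
    n * E.freqDev a n ω
      = ∑ k ∈ Finset.range n, (E.stepIndicator a k ω - E.stepProb a k ω)
        + (p * d - 1) / ((d : ℝ) - 1) * ∑ k ∈ Finset.range n, E.freqDev a k ω := by
  simp only [mul_freqDev, count_eq_sum_stepIndicator, stepProb, Finset.sum_sub_distrib,
    Finset.sum_add_distrib, Finset.sum_const, Finset.card_range, nsmul_eq_mul, ← Finset.mul_sum]
  ring

theorem ae_tendsto_freqDev (hd : 3 ≤ d) (hp0 : 0 ≤ p) (hp1 : p < 1) [IsProbabilityMeasure P]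
    (E : ERW G d p Ω P) {a : G} (ha : a ∈ E.S) :
    ∀ᵐ ω ∂P, Tendsto (fun n => E.freqDev a n ω) atTop (nhds 0) := by
  have h_diff : IsBoundedMartingaleDiff
      (fun n => E.stepIndicator a n - P[E.stepIndicator a n | E.filtration n]) E.filtration P
      (2 * 1) :=
    isBoundedMartingaleDiff_sub_condExp
      (fun n => (E.measurable_filt_of_factorsThrough
        (E.stepIndicator_factorsThrough_history a n)).stronglyMeasurable)
      (fun n => ae_of_all _ fun ω => E.abs_stepIndicator_le a n ω)
  filter_upwards [h_diff.ae_tendsto_average,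
    ae_all_iff.2 fun n => E.condExp_stepIndicator (by omega) ha n]
    with ω h_avg h_condExp
  refine tendsto_zero_of_averaged_recursion (abs_memory_lt_one hd hp0 hp1)
    (fun n => E.abs_freqDev_le a n ω) (fun n => E.mul_freqDev_eq a n ω) (h_avg.congr fun n => ?_)
  simp only [Pi.sub_apply]
  exact congrArg (· / (n : ℝ)) (Finset.sum_congr rfl fun k _ => by rw [← h_condExp]; rfl)

/-! ### The drift -/

/-- The indicator of the event that the walker is away from the root and `γ n = a`. -/
def gammaIndicator (E : ERW G d p Ω P) (a : G) (n : ℕ) (ω : Ω) : ℝ :=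
  if E.pos n ω ≠ 1 ∧ E.gammaStep n ω = a then 1 else 0

theorem gammaIndicator_factorsThrough_history (E : ERW G d p Ω P) (a : G) (n : ℕ) :
    (E.gammaIndicator a n).FactorsThrough (E.history n) := fun _ _ h => by
  simp only [gammaIndicator, E.pos_factorsThrough_history n h,
    E.gammaStep_factorsThrough_history n h]

theorem sum_gammaIndicator_mul (E : ERW G d p Ω P) (n : ℕ) (ω : Ω) (F : G → ℝ) :
    ∑ a ∈ E.S, E.gammaIndicator a n ω * F a
      = if E.pos n ω = 1 then 0 else F (E.gammaStep n ω) := by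
  unfold gammaIndicator
  split_ifs with h
  · simp [h]
  · simp [h, (E.gammaStep_spec h).1]

theorem increment_eq_sum (E : ERW G d p Ω P) (n : ℕ) :
    E.increment n
      = (fun _ => 1) - (2 : ℝ) • ∑ a ∈ E.S, E.gammaIndicator a n * E.stepIndicator a n := by
  ext ω
  simp only [Pi.sub_apply, Pi.smul_apply, Finset.sum_apply, Pi.mul_apply, smul_eq_mul,
    sum_gammaIndicator_mul E n ω fun a => E.stepIndicator a n ω]
  simp only [increment_eq, stepIndicator_apply, ite_and, ite_not]

theorem integrable_gammaIndicator_mul [IsFiniteMeasure P] (E : ERW G d p Ω P) (a : G) (n : ℕ) :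
    Integrable (E.gammaIndicator a n * E.stepIndicator a n) P :=
  E.integrable_of_factorsThrough (n := n + 1) fun _ _ h => congrArg₂ (· * ·)
    (E.gammaIndicator_factorsThrough_history a n (E.history_factorsThrough_history n.le_succ h))
    (E.stepIndicator_factorsThrough_history a n h)

theorem condExp_gammaIndicator_mul (hd : 2 ≤ d) [IsProbabilityMeasure P] (E : ERW G d p Ω P)
    {a : G} (ha : a ∈ E.S) (n : ℕ) :
    P[E.gammaIndicator a n * E.stepIndicator a n | E.filt n]
      =ᵐ[P] E.gammaIndicator a n * E.stepProb a n :=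
  (condExp_mul_of_stronglyMeasurable_left
    (E.measurable_filt_of_factorsThrough
      (E.gammaIndicator_factorsThrough_history a n)).stronglyMeasurable
    (E.integrable_gammaIndicator_mul a n)
    (E.integrable_of_factorsThrough (E.stepIndicator_factorsThrough_history a n))).trans
  ((E.condExp_stepIndicator hd ha n).mono fun ω hω => by simp only [Pi.mul_apply, hω])

theorem drift_ae_eq (hd : 2 ≤ d) [IsProbabilityMeasure P] (E : ERW G d p Ω P) (n : ℕ) :
    E.drift n =ᵐ[P] fun ω =>
      1 - 2 * if E.pos n ω = 1 then 0 else E.stepProb (E.gammaStep n ω) n ω := by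
  have h_int := fun a (_ : a ∈ E.S) => E.integrable_gammaIndicator_mul a n
  have h_sum : P[∑ a ∈ E.S, E.gammaIndicator a n * E.stepIndicator a n | E.filt n]
      =ᵐ[P] ∑ a ∈ E.S, E.gammaIndicator a n * E.stepProb a n :=
    (condExp_finsetSum h_int _).trans
      (eventuallyEq_sum fun a ha => E.condExp_gammaIndicator_mul hd ha n)
  have h_drift : E.drift n = P[(fun _ => 1) - (2 : ℝ) • ∑ a ∈ E.S,
      E.gammaIndicator a n * E.stepIndicator a n | E.filt n] := by
    rw [← increment_eq_sum]
    rfl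
  rw [h_drift]
  filter_upwards [condExp_sub (integrable_const (1 : ℝ))
      ((integrable_finsetSum' _ h_int).smul (2 : ℝ)) (E.filt n),
    condExp_smul (2 : ℝ) (∑ a ∈ E.S, E.gammaIndicator a n * E.stepIndicator a n) (E.filt n),
    h_sum] with ω h_sub h_smul h_sum
  rw [h_sub, Pi.sub_apply, condExp_const (E.filt_le n), h_smul, Pi.smul_apply, h_sum]
  simp only [Finset.sum_apply, Pi.mul_apply, smul_eq_mul,
    sum_gammaIndicator_mul E n ω fun a => E.stepProb a n ω]

/-- The summand `ℓ n / n - 1(Δ n > 0)/d` of `Ξ`: the frequency deviation of the step `γ n` when the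
walker is away from the root, and `0` otherwise. -/
def gammaFreqDev (E : ERW G d p Ω P) (n : ℕ) (ω : Ω) : ℝ :=
  (E.ell n ω : ℝ) / n - (if 0 < E.dist n ω then 1 else 0) / d

theorem gammaFreqDev_eq (E : ERW G d p Ω P) (n : ℕ) (ω : Ω) :
    E.gammaFreqDev n ω
      = if E.pos n ω = 1 then 0 else E.freqDev (E.gammaStep n ω) n ω := by
  simp only [gammaFreqDev, E.dist_pos_iff, ell, ite_not]
  split_ifs with h
  · simp
  · have hn : n ≠ 0 := by
      rintro rfl
      exact h rfl
    exact (E.freqDev_eq _ hn ω).symm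

theorem abs_gammaFreqDev_le (E : ERW G d p Ω P) (n : ℕ) (ω : Ω) :
    |E.gammaFreqDev n ω| ≤ ∑ a ∈ E.S, |E.freqDev a n ω| := by
  rw [gammaFreqDev_eq]
  split_ifs with h
  · rw [abs_zero]
    exact Finset.sum_nonneg fun a _ => abs_nonneg _
  · exact Finset.single_le_sum (f := fun a => |E.freqDev a n ω|) (fun a _ => abs_nonneg _)
      (E.gammaStep_spec h).1

theorem ae_tendsto_gammaFreqDev (hd : 3 ≤ d) (hp0 : 0 ≤ p) (hp1 : p < 1)
    [IsProbabilityMeasure P] (E : ERW G d p Ω P) :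
    ∀ᵐ ω ∂P, Tendsto (fun n => E.gammaFreqDev n ω) atTop (nhds 0) := by
  filter_upwards [(Finset.eventually_all E.S).2 fun a ha => E.ae_tendsto_freqDev hd hp0 hp1 ha]
    with ω hω
  refine squeeze_zero_norm (fun n => E.abs_gammaFreqDev_le n ω) ?_
  simpa only [abs_zero, Finset.sum_const_zero] using
    tendsto_finsetSum E.S fun a ha => (hω a ha).abs

/-- The indicator of the event that the walker is at the root at time `n`. -/
def rootIndicator (E : ERW G d p Ω P) (n : ℕ) (ω : Ω) : ℝ :=
  if E.pos n ω = 1 then 1 else 0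

theorem rootIndicator_nonneg (E : ERW G d p Ω P) (n : ℕ) (ω : Ω) : 0 ≤ E.rootIndicator n ω := by
  rw [rootIndicator]
  split_ifs <;> norm_num

theorem measurable_rootIndicator (E : ERW G d p Ω P) (n : ℕ) : Measurable (E.rootIndicator n) :=
  (E.measurable_filt_of_factorsThrough fun _ _ h => by
    simp only [rootIndicator, E.pos_factorsThrough_history n h]).mono (E.filt_le n) le_rfl

theorem drift_ae_eq_gammaFreqDev (hd : 2 ≤ d) [IsProbabilityMeasure P] (E : ERW G d p Ω P)
    (n : ℕ) :
    E.drift n =ᵐ[P] fun ω => ((d : ℝ) - 2) / d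
      + (2 * (1 - p * d) / ((d : ℝ) - 1)) * E.gammaFreqDev n ω
      + 2 / d * E.rootIndicator n ω := by
  have hd0 : (d : ℝ) ≠ 0 := Nat.cast_ne_zero.2 (by omega)
  filter_upwards [E.drift_ae_eq hd n] with ω hω
  simp only [hω, gammaFreqDev_eq, rootIndicator, stepProb]
  split_ifs
  · field_simp
    ring
  · have h_memory : 2 * (1 - p * d) / ((d : ℝ) - 1) = -2 * ((p * d - 1) / ((d : ℝ) - 1)) := by
      ring
    rw [h_memory]
    field_simp
    ring

/-! ### The martingale, transience and the limit law -/

theorem mart_eq_sum_range (E : ERW G d p Ω P) (n : ℕ) (ω : Ω) :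
    E.mart n ω = ∑ k ∈ Finset.range n, (E.increment k ω - E.drift k ω) := by
  rw [Finset.range_eq_Ico, Finset.sum_congr rfl fun k _ =>
    show E.increment k ω - E.drift k ω = E.mdiff (k + 1) ω from rfl,
    Finset.sum_Ico_add' fun k => E.mdiff k ω]
  rfl

theorem measurable_increment (E : ERW G d p Ω P) (n : ℕ) :
    Measurable[E.filtration (n + 1)] (E.increment n) :=
  E.measurable_filt_of_factorsThrough (E.increment_factorsThrough_history n)

theorem abs_increment (E : ERW G d p Ω P) (n : ℕ) (ω : Ω) : |E.increment n ω| = 1 :=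
  (pow_eq_one_iff_of_nonneg (abs_nonneg _) two_ne_zero).1
    ((sq_abs _).trans (congrFun (E.increment_sq n) ω))

theorem ae_tendsto_mart_div [IsProbabilityMeasure P] (E : ERW G d p Ω P) :
    ∀ᵐ ω ∂P, Tendsto (fun n : ℕ => E.mart n ω / n) atTop (nhds 0) := by
  have h_diff : IsBoundedMartingaleDiff
      (fun n => E.increment n - P[E.increment n | E.filtration n]) E.filtration P (2 * 1) :=
    isBoundedMartingaleDiff_sub_condExp (fun n => (E.measurable_increment n).stronglyMeasurable)
      fun n => ae_of_all _ fun ω => (E.abs_increment n ω).le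
  simp only [mart_eq_sum_range]
  exact h_diff.ae_tendsto_average

theorem ae_dist_eq (hd : 2 ≤ d) [IsProbabilityMeasure P] (E : ERW G d p Ω P) :
    ∀ᵐ ω ∂P, ∀ n : ℕ, (E.dist n ω : ℝ) = E.mart n ω + (n * (((d : ℝ) - 2) / d)
      + (2 * (1 - p * d) / ((d : ℝ) - 1)) * ∑ k ∈ Finset.range n, E.gammaFreqDev k ω
      + 2 / d * ∑ k ∈ Finset.range n, E.rootIndicator k ω) := by
  filter_upwards [ae_all_iff.2 fun k => E.drift_ae_eq_gammaFreqDev hd k] with ω hω n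
  have h_drift : ∑ k ∈ Finset.range n, E.drift k ω = n * (((d : ℝ) - 2) / d)
      + (2 * (1 - p * d) / ((d : ℝ) - 1)) * ∑ k ∈ Finset.range n, E.gammaFreqDev k ω
      + 2 / d * ∑ k ∈ Finset.range n, E.rootIndicator k ω := by
    simp only [hω, Finset.sum_add_distrib, ← Finset.mul_sum, Finset.sum_const, Finset.card_range,
      nsmul_eq_mul]
  rw [← h_drift, mart_eq_sum_range, Finset.sum_sub_distrib, sum_increment, sub_add_cancel]

theorem ae_eventually_pos_ne_one (hd : 3 ≤ d) (hp0 : 0 ≤ p) (hp1 : p < 1)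
    [IsProbabilityMeasure P] (E : ERW G d p Ω P) :
    ∀ᵐ ω ∂P, ∀ᶠ n in atTop, E.pos n ω ≠ 1 := by
  have hd' : (3 : ℝ) ≤ d := mod_cast hd
  have h_speed : 0 < ((d : ℝ) - 2) / d := div_pos (by linarith) (by linarith)
  filter_upwards [E.ae_tendsto_mart_div, E.ae_tendsto_gammaFreqDev hd hp0 hp1,
    E.ae_dist_eq (by omega)] with ω h_mart h_dev h_dist
  have h_lim := h_mart.add (h_dev.cesaro.const_mul (2 * (1 - p * d) / ((d : ℝ) - 1)))
  rw [mul_zero, add_zero] at h_lim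
  filter_upwards [h_lim.eventually (lt_mem_nhds (neg_lt_zero.2 h_speed)), eventually_gt_atTop 0]
    with n h_lt hn
  have hn' : (0 : ℝ) < n := Nat.cast_pos.2 hn
  have h_root : 0 ≤ 2 / d * ∑ k ∈ Finset.range n, E.rootIndicator k ω :=
    mul_nonneg (by positivity) (Finset.sum_nonneg fun k _ => E.rootIndicator_nonneg k ω)
  refine E.dist_pos_iff.1 ((Nat.cast_pos (α := ℝ)).1 ?_)
  have h_mul := mul_lt_mul_of_pos_left h_lt hn'
  rw [mul_add, mul_div_cancel₀ _ hn'.ne', mul_left_comm, mul_inv_cancel_left₀ hn'.ne'] at h_mul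
  rw [h_dist n]
  linarith

theorem ae_eventually_rootIndicator_eq_zero (hd : 3 ≤ d) (hp0 : 0 ≤ p) (hp1 : p < 1)
    [IsProbabilityMeasure P] (E : ERW G d p Ω P) :
    ∀ᵐ ω ∂P, ∀ᶠ n in atTop, E.rootIndicator n ω = 0 := by
  filter_upwards [E.ae_eventually_pos_ne_one hd hp0 hp1] with ω hω
  filter_upwards [hω] with n hn using if_neg hn

theorem ae_tendsto_drift (hd : 3 ≤ d) (hp0 : 0 ≤ p) (hp1 : p < 1)
    [IsProbabilityMeasure P] (E : ERW G d p Ω P) :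
    ∀ᵐ ω ∂P, Tendsto (fun n => E.drift n ω) atTop (nhds (((d : ℝ) - 2) / d)) := by
  filter_upwards [E.ae_tendsto_gammaFreqDev hd hp0 hp1,
    E.ae_eventually_rootIndicator_eq_zero hd hp0 hp1,
    ae_all_iff.2 fun n => E.drift_ae_eq_gammaFreqDev (by omega) n] with ω h_dev h_root h_drift
  have h_lim := ((h_dev.const_mul (2 * (1 - p * d) / ((d : ℝ) - 1))).const_add
    (((d : ℝ) - 2) / d)).add ((EventuallyEq.tendsto h_root).const_mul (2 / (d : ℝ)))
  simpa only [h_drift, mul_zero, add_zero] using h_lim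

theorem tendstoInDistribution_mart (hd : 3 ≤ d) (hp0 : 0 ≤ p) (hp1 : p < 1)
    [IsProbabilityMeasure P] (E : ERW G d p Ω P) :
    TendstoInDistribution (fun (n : ℕ) ω => (√n)⁻¹ * E.mart n ω) atTop id (fun _ => P)
      (gaussianReal 0 (Real.toNNReal (4 * ((d : ℝ) - 1) / (d : ℝ) ^ 2))) := by
  have hd' : (3 : ℝ) ≤ d := mod_cast hd
  have h_var : (Real.toNNReal (4 * ((d : ℝ) - 1) / (d : ℝ) ^ 2) : ℝ)
      = 1 - (((d : ℝ) - 2) / d) ^ 2 := by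
    rw [Real.coe_toNNReal _ (div_nonneg (by linarith) (by positivity))]
    field_simp
    ring
  simp only [mart_eq_sum_range]
  exact tendstoInDistribution_sum_sub_condExp_of_sq_eq_one
    (fun n => (E.measurable_increment n).stronglyMeasurable) E.increment_sq
    (E.ae_tendsto_drift hd hp0 hp1) h_var HasLaw.id

theorem ae_fluctuation_eq (hd : 2 ≤ d) [IsProbabilityMeasure P] (E : ERW G d p Ω P) :
    ∀ᵐ ω ∂P, ∀ n : ℕ, √n * ((E.dist n ω : ℝ) / n - ((d : ℝ) - 2) / d
        - (2 * (1 - p * d) / ((d : ℝ) - 1)) * E.Xi n ω)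
      = (√n)⁻¹ * E.mart n ω
        + 2 / d * ((∑ k ∈ Finset.range n, E.rootIndicator k ω) / √n) := by
  filter_upwards [E.ae_dist_eq hd] with ω hω n
  have h_Xi : E.Xi n ω = 1 / n * ∑ k ∈ Finset.range n, E.gammaFreqDev k ω := rfl
  rcases n.eq_zero_or_pos with rfl | hn
  · simp
  have h_sqrt : √(n : ℝ) / n = (√n)⁻¹ := Real.sqrt_div_self
  rw [hω, h_Xi, div_eq_mul_inv _ √(n : ℝ), ← h_sqrt]
  field_simp
  ring

theorem tendstoInDistribution_fluctuation (hd : 3 ≤ d) (hp0 : 0 ≤ p) (hp1 : p < 1)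
    [IsProbabilityMeasure P] (E : ERW G d p Ω P) :
    TendstoInDistribution (fun (n : ℕ) ω => √n * ((E.dist n ω : ℝ) / n - ((d : ℝ) - 2) / d
        - (2 * (1 - p * d) / ((d : ℝ) - 1)) * E.Xi n ω)) atTop id (fun _ => P)
      (gaussianReal 0 (Real.toNNReal (4 * ((d : ℝ) - 1) / (d : ℝ) ^ 2))) := by
  have h_visits : ∀ᵐ ω ∂P, Tendsto (fun n : ℕ =>
      2 / d * ((∑ k ∈ Finset.range n, E.rootIndicator k ω) / √n)) atTop (nhds 0) := by
    filter_upwards [E.ae_eventually_rootIndicator_eq_zero hd hp0 hp1] with ω hω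
    simpa only [mul_zero] using (tendsto_sum_range_div_sqrt_zero hω).const_mul (2 / (d : ℝ))
  have h_meas (n : ℕ) : Measurable fun ω =>
      2 / d * ((∑ k ∈ Finset.range n, E.rootIndicator k ω) / √n) := by
    refine ((Finset.measurable_sum _ fun k _ => ?_).div_const _).const_mul _
    exact E.measurable_rootIndicator k
  have h_slutsky := (E.tendstoInDistribution_mart hd hp0 hp1).add_of_tendstoInMeasure_const
    (tendstoInMeasure_of_tendsto_ae (fun n => (h_meas n).aestronglyMeasurable) h_visits)
    fun n => (h_meas n).aemeasurable
  refine h_slutsky.congr (fun n => ?_) (ae_of_all _ fun x => ?_)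
  · filter_upwards [E.ae_fluctuation_eq (by omega)] with ω hω using (hω n).symm
  · simp

end ERW

/-- central limit theorem for the compensated speed:
`√n (Δ n / n - (d-2)/d - (2(1-pd)/(d-1)) Ξ n)` converges in distribution to
`N(0, 4(d-1)/d²)` (stated via convergence of integrals of bounded continuous
functions). -/
theorem erw_fluctuations
    {G : Type*} [Group G] [DecidableEq G] {Ω : Type*} [MeasurableSpace Ω]
    {P : Measure Ω} [IsProbabilityMeasure P]
    (d : ℕ) (hd : 3 ≤ d) (p : ℝ) (hp0 : 0 ≤ p) (hp1 : p < 1)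
    (E : ERW G d p Ω P) :
    ∀ f : BoundedContinuousFunction ℝ ℝ,
      Tendsto (fun n : ℕ =>
          ∫ ω, f (Real.sqrt n *
            ((E.dist n ω : ℝ) / n - ((d : ℝ) - 2) / d
              - (2 * (1 - p * d) / ((d : ℝ) - 1)) * E.Xi n ω)) ∂P)
        atTop
        (nhds (∫ x, f x
          ∂(gaussianReal 0 (Real.toNNReal (4 * ((d : ℝ) - 1) / (d : ℝ) ^ 2))))) := by
  intro f
  have h_distr := E.tendstoInDistribution_fluctuation hd hp0 hp1
  have h_lim := ProbabilityMeasure.tendsto_iff_forall_integral_tendsto.1 h_distr.tendsto f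
  simpa only [ProbabilityMeasure.coe_mk, Measure.map_id,
    integral_map (h_distr.forall_aemeasurable _) f.continuous.aestronglyMeasurable] using h_lim

end
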